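/- Let F_c^{(α)} be the weighted finite Fourier transform operator defined by (F_c^{(α)} f)(x) = ∫_{-1}^{1} e^{icxy} f(y) (1-y²)^α dy on L²([-1,1], (1-y²)^α dy), with c > 0 and α ≥ 0. Let P̃_k denote the L²(ω_α)-normalized Jacobi polynomial of degree k with both parameters α. Then for all k ≥ 1, ‖F_c^{(α)} P̃_k‖_{L²(I,ω_α)} ≤ (π √Γ(α+1) / (√c · k^{(α+1)/2})) · (ce/(2k+1))^{k+1/2}. -/

import Mathlib

open Real MeasureTheory intervalIntegral

/-- `Γ(x + s) / Γ(y + s) ≤ Γ(x) / Γ(y)` for `0 < x ≤ y` and `0 ≤ s`, in product form. -/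
lemma Gamma_add_mul_Gamma_le {x y s : ℝ} (hx : 0 < x) (hxy : x ≤ y) (hs : 0 ≤ s) :
    Gamma (x + s) * Gamma y ≤ Gamma x * Gamma (y + s) := by
  rcases hs.eq_or_lt with rfl | hs
  · simp
  have hd : 0 < y - x + s := by linarith
  have hy : 0 < y := by linarith
  have hx' : x ∈ Set.Ioi (0 : ℝ) := hx
  have hy' : y + s ∈ Set.Ioi (0 : ℝ) := by simp; linarith
  have ht : 0 ≤ s / (y - x + s) := by positivity
  have ht' : 0 ≤ (y - x) / (y - x + s) := div_nonneg (by linarith) hd.le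
  have hsum : (y - x) / (y - x + s) + s / (y - x + s) = 1 := by field_simp
  have h1 := convexOn_log_Gamma.2 hx' hy' ht' ht hsum
  have h2 := convexOn_log_Gamma.2 hx' hy' ht ht' (by rw [add_comm]; exact hsum)
  have e1 : ((y - x) / (y - x + s)) • x + (s / (y - x + s)) • (y + s) = x + s := by
    simp only [smul_eq_mul]; field_simp; ring
  have e2 : (s / (y - x + s)) • x + ((y - x) / (y - x + s)) • (y + s) = y := by
    simp only [smul_eq_mul]; field_simp; ring
  rw [e1] at h1
  rw [e2] at h2
  simp only [Function.comp_apply, smul_eq_mul] at h1 h2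
  have g1 := Gamma_pos_of_pos hx
  have g2 := Gamma_pos_of_pos hy
  have g3 := Gamma_pos_of_pos (by linarith : 0 < x + s)
  have g4 := Gamma_pos_of_pos (by linarith : 0 < y + s)
  rw [← log_le_log_iff (by positivity) (by positivity), log_mul g3.ne' g2.ne',
    log_mul g1.ne' g4.ne']
  have : log (Gamma x) + log (Gamma (y + s)) =
      ((y - x) / (y - x + s) + s / (y - x + s)) * (log (Gamma x) + log (Gamma (y + s))) := by
    rw [hsum, one_mul]
  linarith

lemma rpow_mul_Gamma_add_one_le {x s : ℝ} (hx : 0 < x) (hs : 0 ≤ s) :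
    x ^ s * Gamma (x + 1) ≤ Gamma (x + 1 + s) := by
  rcases hs.eq_or_lt with rfl | hs
  · simp
  have h := convexOn_log_Gamma.slope_mono_adjacent (x := x) (y := x + 1) (z := x + 1 + s)
    hx (by simp; linarith) (by linarith) (by linarith)
  have g1 := Gamma_pos_of_pos hx
  have g2 := Gamma_pos_of_pos (by linarith : 0 < x + 1)
  have g3 := Gamma_pos_of_pos (by linarith : 0 < x + 1 + s)
  simp only [Function.comp_apply, add_sub_cancel_left, div_one] at h
  rw [le_div_iff₀ hs, Gamma_add_one hx.ne', log_mul hx.ne' g1.ne'] at h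
  rw [← log_le_log_iff (by positivity) g3, log_mul (by positivity) g2.ne', log_rpow hx,
    Gamma_add_one hx.ne', log_mul hx.ne' g1.ne']
  linarith

lemma stirling_lower_bound_Gamma_add_three_halves {k : ℕ} (hk : 1 ≤ k) :
    k * (2 * (k : ℝ) + 1) ^ (2 * k + 1) ≤
      π * exp 1 ^ (2 * k + 1) * 4 ^ k * Gamma (k + 3 / 2) ^ 2 := by
  have hk0 : (0 : ℝ) < k := by exact_mod_cast hk
  have hG := Gamma_add_mul_Gamma_le (x := (k : ℝ) + 1 / 2) (y := k + 1) (s := 1 / 2)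
    (by positivity) (by linarith) (by norm_num)
  have hrec : Gamma ((k : ℝ) + 3 / 2) = (k + 1 / 2) * Gamma (k + 1 / 2) := by
    rw [← Gamma_add_one (by positivity)]; ring_nf
  rw [show (k : ℝ) + 1 / 2 + 1 / 2 = k + 1 by ring, show (k : ℝ) + 1 + 1 / 2 = k + 3 / 2 by ring,
    Gamma_nat_eq_factorial] at hG
  have hG2 : ((k : ℝ) + 1 / 2) * (k.factorial : ℝ) ^ 2 ≤ Gamma (k + 3 / 2) ^ 2 := by
    calc ((k : ℝ) + 1 / 2) * (k.factorial : ℝ) ^ 2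
        = (k + 1 / 2) * (k.factorial * k.factorial) := by ring
      _ ≤ (k + 1 / 2) * (Gamma (k + 1 / 2) * Gamma (k + 3 / 2)) := by gcongr
      _ = _ := by rw [hrec]; ring
  have hS : 2 * π * k * (k / exp 1) ^ (2 * k) ≤ (k.factorial : ℝ) ^ 2 := by
    have := pow_le_pow_left₀ (by positivity) (Stirling.le_factorial_stirling k) 2
    rwa [mul_pow, sq_sqrt (by positivity), ← pow_mul, mul_comm k 2] at this
  have hE : (1 + 1 / (2 * (k : ℝ))) ^ (2 * k) ≤ exp 1 := by
    calc (1 + 1 / (2 * (k : ℝ))) ^ (2 * k) ≤ exp (1 / (2 * (k : ℝ))) ^ (2 * k) := by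
          gcongr
          linarith [add_one_le_exp (1 / (2 * (k : ℝ)))]
      _ = exp 1 := by
          rw [← exp_nat_mul]; congr 1; push_cast; field_simp
  have hpi : 1 ≤ π ^ 2 := by nlinarith [pi_gt_three]
  calc k * (2 * (k : ℝ) + 1) ^ (2 * k + 1)
      = 2 * k * (k + 1 / 2) * 4 ^ k * k ^ (2 * k) * (1 + 1 / (2 * (k : ℝ))) ^ (2 * k) := by
        rw [show 2 * (k : ℝ) + 1 = 2 * (k * (1 + 1 / (2 * (k : ℝ)))) by field_simp, pow_succ,
          mul_pow, mul_pow, pow_mul 2, show (2 : ℝ) ^ 2 = 4 by norm_num]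
        field_simp
    _ ≤ 2 * k * (k + 1 / 2) * 4 ^ k * k ^ (2 * k) * exp 1 * π ^ 2 := by
        refine (mul_le_mul_of_nonneg_left hE (by positivity)).trans
          (le_mul_of_one_le_right (by positivity) hpi)
    _ = π * exp 1 ^ (2 * k + 1) * 4 ^ k *
          ((k + 1 / 2) * (2 * π * k * (k / exp 1) ^ (2 * k))) := by
        rw [div_pow, pow_succ (exp 1)]; field_simp
    _ ≤ π * exp 1 ^ (2 * k + 1) * 4 ^ k * ((k + 1 / 2) * (k.factorial : ℝ) ^ 2) := by gcongr
    _ ≤ _ := by gcongr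

lemma continuous_one_sub_sq_rpow {α : ℝ} (hα : 0 ≤ α) :
    Continuous fun x : ℝ => (1 - x ^ 2) ^ α :=
  (by fun_prop : Continuous fun x : ℝ => 1 - x ^ 2).rpow_const fun _ => Or.inr hα

/-- The even moments of the Gegenbauer weight. -/
lemma integral_pow_mul_one_sub_sq_rpow {α : ℝ} (hα : 0 ≤ α) {k : ℕ} (hk : 1 ≤ k) :
    (∫ x in (-1 : ℝ)..1, x ^ (2 * k) * (1 - x ^ 2) ^ α) =
      Gamma (k + 1 / 2) * Gamma (α + 1) / Gamma (k + α + 3 / 2) := by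
  have hk1 : (1 : ℝ) ≤ k := by exact_mod_cast hk
  have hcont : Continuous fun x : ℝ => x ^ (2 * k) * (1 - x ^ 2) ^ α :=
    (continuous_pow _).mul (continuous_one_sub_sq_rpow hα)
  have hhalf : (∫ x in (-1 : ℝ)..0, x ^ (2 * k) * (1 - x ^ 2) ^ α) =
      ∫ x in (0 : ℝ)..1, x ^ (2 * k) * (1 - x ^ 2) ^ α := by
    have := intervalIntegral.integral_comp_neg (a := 0) (b := 1)
      (fun x : ℝ => x ^ (2 * k) * (1 - x ^ 2) ^ α)
    simpa [Even.neg_pow (even_two_mul k)] using this.symm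
  have hsubst := intervalIntegral.integral_comp_mul_deriv'' (a := 0) (b := 1)
    (f := fun x : ℝ => x ^ 2) (f' := fun x => 2 * x)
    (g := fun u : ℝ => u ^ ((k : ℝ) - 1 / 2) * (1 - u) ^ α) (by fun_prop)
    (fun x _ => by simpa using (hasDerivAt_pow 2 x).hasDerivWithinAt) (by fun_prop)
    (((continuous_id.rpow_const fun _ => Or.inr (by linarith)).mul
      ((by fun_prop : Continuous fun x : ℝ => 1 - x).rpow_const fun _ => Or.inr hα)).continuousOn)
  have hbeta := ProbabilityTheory.beta_eq_betaIntegralReal ((k : ℝ) + 1 / 2) (α + 1)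
    (by linarith) (by linarith)
  have hreal : (Complex.betaIntegral ((k : ℝ) + 1 / 2 : ℝ) (α + 1 : ℝ)).re =
      ∫ u in (0 : ℝ)..1, u ^ ((k : ℝ) - 1 / 2) * (1 - u) ^ α := by
    rw [← Complex.ofReal_re (∫ u in (0 : ℝ)..1, u ^ ((k : ℝ) - 1 / 2) * (1 - u) ^ α),
      Complex.betaIntegral, ← intervalIntegral.integral_ofReal]
    congr 1
    refine intervalIntegral.integral_congr fun u hu => ?_
    rw [Set.uIcc_of_le zero_le_one] at hu
    simp only [Complex.ofReal_mul, Complex.ofReal_cpow hu.1,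
      Complex.ofReal_cpow (by linarith [hu.2] : 0 ≤ 1 - u)]
    push_cast
    congr 2 <;> ring
  rw [← intervalIntegral.integral_add_adjacent_intervals (hcont.intervalIntegrable _ 0)
    (hcont.intervalIntegrable _ _), hhalf, ← two_mul, ← intervalIntegral.integral_const_mul]
  rw [show Gamma (k + 1 / 2) * Gamma (α + 1) / Gamma (k + α + 3 / 2) =
    ProbabilityTheory.beta ((k : ℝ) + 1 / 2) (α + 1) by
      rw [ProbabilityTheory.beta]; ring_nf, hbeta, hreal]
  norm_num only at hsubst
  rw [← hsubst]
  refine intervalIntegral.integral_congr fun x hx => ?_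
  rw [Set.uIcc_of_le zero_le_one] at hx
  have hpow : x ^ (2 * k) = (x ^ 2) ^ ((k : ℝ) - 1 / 2) * x := by
    rw [← rpow_natCast x 2, ← rpow_mul hx.1]
    nth_rewrite 3 [← rpow_one x]
    rw [← rpow_add_of_nonneg hx.1 (by push_cast; linarith) zero_le_one, ← rpow_natCast]
    congr 1; push_cast; ring
  simp only [Function.comp_apply, hpow]
  ring

lemma integral_one_sub_sq_rpow {β : ℝ} (hβ : 1 ≤ β) :
    (∫ x in (-1 : ℝ)..1, (1 - x ^ 2) ^ β) = √π * Gamma (β + 1) / Gamma (β + 3 / 2) := by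
  have hd (x : ℝ) : HasDerivAt (fun x : ℝ => x * (1 - x ^ 2) ^ β)
      ((1 - x ^ 2) ^ β - 2 * β * (x ^ (2 * 1) * (1 - x ^ 2) ^ (β - 1))) x := by
    have := (hasDerivAt_id x).mul ((((hasDerivAt_pow 2 x).const_sub 1)).rpow_const
      (p := β) (Or.inr hβ))
    refine HasDerivAt.congr_deriv this ?_
    simp only [id]
    push_cast
    ring
  have hc1 := continuous_one_sub_sq_rpow (α := β) (by linarith)
  have hc2 : Continuous fun x : ℝ => x ^ (2 * 1) * (1 - x ^ 2) ^ (β - 1) :=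
    (continuous_pow _).mul (continuous_one_sub_sq_rpow (by linarith))
  have hc3 : Continuous fun x : ℝ => 2 * β * (x ^ (2 * 1) * (1 - x ^ 2) ^ (β - 1)) :=
    continuous_const.mul hc2
  have h := intervalIntegral.integral_eq_sub_of_hasDerivAt (a := -1) (b := 1)
    (fun x _ => hd x) ((hc1.sub hc3).intervalIntegrable _ _)
  rw [intervalIntegral.integral_sub (hc1.intervalIntegrable _ _)
    (hc3.intervalIntegrable _ _), intervalIntegral.integral_const_mul,
    integral_pow_mul_one_sub_sq_rpow (by linarith) le_rfl] at h
  have h0 : (0 : ℝ) ^ β = 0 := zero_rpow (by linarith)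
  have hG : Gamma (3 / 2) = √π / 2 := by
    rw [show (3 / 2 : ℝ) = 1 / 2 + 1 by norm_num, Gamma_add_one (by norm_num), Gamma_one_half_eq]
    ring
  rw [Gamma_add_one (by linarith)]
  norm_num [h0] at h
  rw [hG] at h
  rw [sub_eq_zero.mp h]
  ring

/-- The polynomial `Q` with `((1 - x²)^(α + 1) R)' = -(1 - x²)^α Q`. -/
noncomputable def gegenbauerRaise (α : ℝ) (R : Polynomial ℝ) : Polynomial ℝ :=
  Polynomial.C (2 * (α + 1)) * (Polynomial.X * R) -
    (1 - Polynomial.X ^ 2) * Polynomial.derivative R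

/-- The polynomial `J` with `((1 - x²)^(α + k))⁽ᵏ⁾ = (-1)ᵏ (1 - x²)^α J`, a multiple of the
Jacobi polynomial of degree `k` with both parameters equal to `α`. -/
noncomputable def gegenbauerRodrigues : ℕ → ℝ → Polynomial ℝ
  | 0, _ => 1
  | k + 1, α => gegenbauerRaise α (gegenbauerRodrigues k (α + 1))

lemma natDegree_gegenbauerRaise_le (α : ℝ) {R : Polynomial ℝ} {k : ℕ} (hR : R.natDegree ≤ k) :
    (gegenbauerRaise α R).natDegree ≤ k + 1 := by
  rw [Polynomial.natDegree_le_iff_coeff_eq_zero] at hR ⊢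
  intro N hN
  obtain ⟨n, rfl⟩ : ∃ n, N = n + 2 := ⟨N - 2, by omega⟩
  rw [gegenbauerRaise, sub_mul, one_mul, pow_two, mul_assoc]
  simp only [Polynomial.coeff_sub, Polynomial.coeff_C_mul, Polynomial.coeff_X_mul,
    Polynomial.coeff_derivative]
  simp [hR (n + 1) (by omega), hR (n + 3) (by omega)]

lemma coeff_gegenbauerRaise (α : ℝ) {R : Polynomial ℝ} {k : ℕ} (hR : R.natDegree ≤ k) :
    (gegenbauerRaise α R).coeff (k + 1) = (2 * α + k + 2) * R.coeff k := by
  rw [Polynomial.natDegree_le_iff_coeff_eq_zero] at hR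
  rw [gegenbauerRaise, sub_mul, one_mul, pow_two, mul_assoc]
  simp only [Polynomial.coeff_sub, Polynomial.coeff_C_mul, Polynomial.coeff_X_mul,
    Polynomial.coeff_derivative, hR (k + 1 + 1) (by omega)]
  cases k with
  | zero =>
    simp
    left
    ring
  | succ n => simp [Polynomial.coeff_X_mul, Polynomial.coeff_derivative]; ring

lemma natDegree_gegenbauerRodrigues_le (k : ℕ) (α : ℝ) :
    (gegenbauerRodrigues k α).natDegree ≤ k := by
  induction k generalizing α with
  | zero => simp [gegenbauerRodrigues]
  | succ k ih => exact natDegree_gegenbauerRaise_le α (ih _)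

lemma coeff_gegenbauerRodrigues (k : ℕ) {α : ℝ} (hα : 0 ≤ α) :
    (gegenbauerRodrigues k α).coeff k = Gamma (2 * α + 2 * k + 1) / Gamma (2 * α + k + 1) := by
  induction k generalizing α with
  | zero => simp [gegenbauerRodrigues, (Gamma_pos_of_pos (by linarith : 0 < 2 * α + 1)).ne']
  | succ k ih =>
    have hpos : 0 < 2 * α + k + 2 := by positivity
    have hG := Gamma_pos_of_pos hpos
    rw [gegenbauerRodrigues, coeff_gegenbauerRaise α (natDegree_gegenbauerRodrigues_le k _),
      ih (by linarith)]
    push_cast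
    rw [show 2 * (α + 1) + k + 1 = 2 * α + k + 2 + 1 by ring, Gamma_add_one hpos.ne',
      show 2 * α + (k + 1) + 1 = 2 * α + k + 2 by ring,
      show 2 * (α + 1) + 2 * k + 1 = 2 * α + 2 * (k + 1) + 1 by ring]
    field_simp

section IntegrationByParts

variable {E : Type*} [NormedAddCommGroup E] [NormedSpace ℝ E] [CompleteSpace E]

lemma integral_gegenbauerRaise_smul {α : ℝ} (hα : 0 ≤ α) (R : Polynomial ℝ) {f f' : ℝ → E}
    (hf : ∀ x, HasDerivAt f (f' x) x) (hf' : Continuous f') :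
    (∫ x in (-1 : ℝ)..1, ((gegenbauerRaise α R).eval x * (1 - x ^ 2) ^ α) • f x) =
      ∫ x in (-1 : ℝ)..1, (R.eval x * (1 - x ^ 2) ^ (α + 1)) • f' x := by
  have hu (x : ℝ) : HasDerivAt (fun x : ℝ => R.eval x * (1 - x ^ 2) ^ (α + 1))
      (-((gegenbauerRaise α R).eval x * (1 - x ^ 2) ^ α)) x := by
    have h := (R.hasDerivAt x).mul ((((hasDerivAt_pow 2 x).const_sub 1)).rpow_const
      (p := α + 1) (Or.inr (by linarith)))
    refine HasDerivAt.congr_deriv h ?_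
    rcases eq_or_ne (1 - x ^ 2) 0 with h0 | h0
    · simp [gegenbauerRaise, h0, zero_rpow (by linarith : α + 1 ≠ 0)]
      ring
    · rw [rpow_add_one h0]
      simp [gegenbauerRaise]
      ring
  have hu' : Continuous fun x : ℝ => -((gegenbauerRaise α R).eval x * (1 - x ^ 2) ^ α) :=
    ((gegenbauerRaise α R).continuous.mul (continuous_one_sub_sq_rpow hα)).neg
  have h := intervalIntegral.integral_smul_deriv_eq_deriv_smul (a := -1) (b := 1)
    (fun x _ => hu x) (fun x _ => hf x) (hu'.intervalIntegrable _ _)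
    (hf'.intervalIntegrable _ _)
  rw [h]
  simp [zero_rpow (by linarith : α + 1 ≠ 0)]

lemma integral_gegenbauerRodrigues_smul (k : ℕ) {α : ℝ} (hα : 0 ≤ α) {f : ℕ → ℝ → E}
    (hf : ∀ n x, HasDerivAt (f n) (f (n + 1) x) x) :
    (∫ x in (-1 : ℝ)..1, ((gegenbauerRodrigues k α).eval x * (1 - x ^ 2) ^ α) • f 0 x) =
      ∫ x in (-1 : ℝ)..1, ((1 - x ^ 2) ^ (α + k)) • f k x := by
  induction k generalizing α f with
  | zero => simp [gegenbauerRodrigues]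
  | succ k ih =>
    rw [gegenbauerRodrigues, integral_gegenbauerRaise_smul hα _ (hf 0)
      (continuous_iff_continuousAt.2 fun x => (hf 1 x).continuousAt),
      ih (α := α + 1) (f := fun n => f (n + 1)) (by linarith) (fun n x => hf (n + 1) x)]
    push_cast
    simp only [add_assoc, add_comm (1 : ℝ)]

end IntegrationByParts

lemma integral_gegenbauerRodrigues_mul_eval (k : ℕ) {α : ℝ} (hα : 0 ≤ α) {Q : Polynomial ℝ}
    (hQ : Q.natDegree ≤ k) :
    (∫ x in (-1 : ℝ)..1, (gegenbauerRodrigues k α).eval x * Q.eval x * (1 - x ^ 2) ^ α) =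
      k.factorial * Q.coeff k * ∫ x in (-1 : ℝ)..1, (1 - x ^ 2) ^ (α + k) := by
  have h := integral_gegenbauerRodrigues_smul k hα
    (f := fun n x => (Polynomial.derivative^[n] Q).eval x) fun n x => by
      rw [Function.iterate_succ_apply']
      exact (Polynomial.derivative^[n] Q).hasDerivAt x
  have hd : Polynomial.derivative^[k] Q = Polynomial.C (k.factorial * Q.coeff k) := by
    rw [Polynomial.eq_C_of_natDegree_le_zero (p := Polynomial.derivative^[k] Q)
      ((Polynomial.natDegree_iterate_derivative Q k).trans (by omega)),
      Polynomial.coeff_iterate_derivative]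
    simp [Nat.descFactorial_self]
  simp only [hd, smul_eq_mul, Polynomial.eval_C, Function.iterate_zero, id] at h
  rw [intervalIntegral.integral_mul_const, mul_comm] at h
  rw [← h]
  exact intervalIntegral.integral_congr fun x _ => by ring

lemma one_sub_sq_rpow_nonneg {x : ℝ} (hx : x ∈ Set.Icc (-1 : ℝ) 1) (α : ℝ) :
    0 ≤ (1 - x ^ 2) ^ α :=
  rpow_nonneg (by nlinarith [hx.1, hx.2]) α

lemma eq_zero_of_integral_sq_mul_one_sub_sq_rpow {α : ℝ} (hα : 0 ≤ α) {R : Polynomial ℝ}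
    (h : (∫ x in (-1 : ℝ)..1, R.eval x ^ 2 * (1 - x ^ 2) ^ α) = 0) : R = 0 := by
  have hcont : Continuous fun x : ℝ => R.eval x ^ 2 * (1 - x ^ 2) ^ α :=
    (R.continuous.pow 2).mul (continuous_one_sub_sq_rpow hα)
  refine R.eq_zero_of_infinite_isRoot ((Set.Ioo_infinite (by norm_num : (-1 : ℝ) < 1)).mono ?_)
  intro x hx
  by_contra hne
  refine h.not_gt (intervalIntegral.integral_pos (by norm_num) hcont.continuousOn
    (fun y hy => mul_nonneg (sq_nonneg _)
      (one_sub_sq_rpow_nonneg (Set.Ioc_subset_Icc_self hy) α)) ⟨x, Set.Ioo_subset_Icc_self hx, ?_⟩)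
  have : 0 < 1 - x ^ 2 := by nlinarith [hx.1, hx.2]
  have hne' : R.eval x ≠ 0 := hne
  positivity

/-- A polynomial of degree `k` orthogonal to all polynomials of lower degree is a multiple of the
`k`-th Rodrigues polynomial. -/
lemma eq_C_mul_gegenbauerRodrigues {α : ℝ} (hα : 0 ≤ α) {k : ℕ} (hk : 1 ≤ k) {P : Polynomial ℝ}
    (hdeg : P.natDegree = k)
    (horth : ∀ Q : Polynomial ℝ, Q.natDegree < k →
      (∫ x in (-1 : ℝ)..1, P.eval x * Q.eval x * (1 - x ^ 2) ^ α) = 0) :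
    ∃ a : ℝ, P = Polynomial.C a * gegenbauerRodrigues k α := by
  set J := gegenbauerRodrigues k α with hJ
  have hcoeff : J.coeff k ≠ 0 := by
    rw [hJ, coeff_gegenbauerRodrigues k hα]
    exact (div_pos (Gamma_pos_of_pos (by positivity)) (Gamma_pos_of_pos (by positivity))).ne'
  refine ⟨P.coeff k / J.coeff k, ?_⟩
  set a := P.coeff k / J.coeff k
  set R := P - Polynomial.C a * J with hR
  have hRle : R.natDegree ≤ k := (Polynomial.natDegree_sub_le _ _).trans
    (max_le hdeg.le ((Polynomial.natDegree_C_mul_le _ _).trans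
      (natDegree_gegenbauerRodrigues_le k α)))
  have hRk : R.coeff k = 0 := by
    simp [hR, a, div_mul_cancel₀ _ hcoeff]
  have hRlt : R.natDegree < k := by
    refine hRle.lt_of_ne fun h => ?_
    rw [← h, Polynomial.coeff_natDegree, Polynomial.leadingCoeff_eq_zero] at hRk
    simp only [hRk, Polynomial.natDegree_zero] at h
    omega
  have hJR : (∫ x in (-1 : ℝ)..1, J.eval x * R.eval x * (1 - x ^ 2) ^ α) = 0 := by
    rw [integral_gegenbauerRodrigues_mul_eval k hα hRle, hRk]
    simp
  have hcont (A : Polynomial ℝ) :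
      Continuous fun x : ℝ => A.eval x * R.eval x * (1 - x ^ 2) ^ α :=
    (A.continuous.mul R.continuous).mul (continuous_one_sub_sq_rpow hα)
  refine sub_eq_zero.mp (eq_zero_of_integral_sq_mul_one_sub_sq_rpow hα (R := R) ?_)
  calc (∫ x in (-1 : ℝ)..1, R.eval x ^ 2 * (1 - x ^ 2) ^ α)
      = ∫ x in (-1 : ℝ)..1, (P.eval x * R.eval x * (1 - x ^ 2) ^ α -
          a * (J.eval x * R.eval x * (1 - x ^ 2) ^ α)) := by
        refine intervalIntegral.integral_congr fun x _ => ?_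
        have : R.eval x = P.eval x - a * J.eval x := by simp [hR]
        simp only [pow_two (R.eval x)]
        nth_rewrite 1 [this]
        ring
    _ = 0 := by
        rw [intervalIntegral.integral_sub ((hcont P).intervalIntegrable _ _)
          (((hcont J).intervalIntegrable _ _).const_mul a), intervalIntegral.integral_const_mul,
          hJR, horth R hRlt]
        simp

lemma norm_sq_fourier_le {α : ℝ} (hα : 0 ≤ α) {k : ℕ} (hk : 1 ≤ k) {P : Polynomial ℝ}
    (hdeg : P.natDegree = k)
    (horth : ∀ Q : Polynomial ℝ, Q.natDegree < k →
      (∫ x in (-1 : ℝ)..1, P.eval x * Q.eval x * (1 - x ^ 2) ^ α) = 0)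
    (hnorm : (∫ x in (-1 : ℝ)..1, (P.eval x) ^ 2 * (1 - x ^ 2) ^ α) = 1) (c x : ℝ) :
    ‖∫ y in (-1 : ℝ)..1, Complex.exp (Complex.I * (c * x * y)) * (↑(P.eval y) : ℂ) *
        (((1 - y ^ 2) ^ α : ℝ) : ℂ)‖ ^ 2 ≤
      c ^ (2 * k) * ((∫ y in (-1 : ℝ)..1, (1 - y ^ 2) ^ (α + k)) /
        (k.factorial * (Gamma (2 * α + 2 * k + 1) / Gamma (2 * α + k + 1)))) * x ^ (2 * k) := by
  obtain ⟨a, rfl⟩ := eq_C_mul_gegenbauerRodrigues hα hk hdeg horth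
  set J := gegenbauerRodrigues k α with hJ
  set L := Gamma (2 * α + 2 * k + 1) / Gamma (2 * α + k + 1) with hL
  set B := ∫ y in (-1 : ℝ)..1, (1 - y ^ 2) ^ (α + k) with hB
  have hLpos : 0 < L :=
    div_pos (Gamma_pos_of_pos (by positivity)) (Gamma_pos_of_pos (by positivity))
  have hsq : a ^ 2 * (k.factorial * L * B) = 1 := by
    rw [← hnorm, hL, ← coeff_gegenbauerRodrigues k hα,
      ← integral_gegenbauerRodrigues_mul_eval k hα (natDegree_gegenbauerRodrigues_le k α),
      ← intervalIntegral.integral_const_mul]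
    refine intervalIntegral.integral_congr fun y _ => ?_
    simp only [Polynomial.eval_mul, Polynomial.eval_C]
    ring
  have hBnn : 0 ≤ B := intervalIntegral.integral_nonneg (by norm_num) fun y hy =>
    one_sub_sq_rpow_nonneg hy _
  have hF : (∫ y in (-1 : ℝ)..1, Complex.exp (Complex.I * (c * x * y)) *
      (↑((Polynomial.C a * J).eval y) : ℂ) * (((1 - y ^ 2) ^ α : ℝ) : ℂ)) =
      a * ∫ y in (-1 : ℝ)..1, (1 - y ^ 2) ^ (α + k) •
        ((Complex.I * (c * x)) ^ k * Complex.exp (Complex.I * (c * x) * y)) := by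
    rw [← integral_gegenbauerRodrigues_smul k hα
      (f := fun n y => (Complex.I * (c * x)) ^ n * Complex.exp (Complex.I * (c * x) * y)),
      ← intervalIntegral.integral_const_mul]
    · refine intervalIntegral.integral_congr fun y _ => ?_
      simp only [Polynomial.eval_mul, Polynomial.eval_C, Complex.real_smul, pow_zero, one_mul,
        Complex.ofReal_mul, mul_assoc]
      ring
    · intro n y
      have h := (((hasDerivAt_id (y : ℂ)).const_mul (Complex.I * (c * x))).cexp.const_mul
        ((Complex.I * (c * x)) ^ n)).comp_ofReal
      refine HasDerivAt.congr_deriv h ?_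
      simp only [id]
      ring
  have hbound : ‖∫ y in (-1 : ℝ)..1, (1 - y ^ 2) ^ (α + k) •
        ((Complex.I * (c * x)) ^ k * Complex.exp (Complex.I * (c * x) * y))‖ ≤
      B * |c * x| ^ k := by
    rw [hB, ← intervalIntegral.integral_mul_const]
    refine intervalIntegral.norm_integral_le_of_norm_le (by norm_num) ?_
      (((continuous_one_sub_sq_rpow (by positivity)).mul continuous_const).intervalIntegrable _ _)
    refine Filter.Eventually.of_forall fun y hy => le_of_eq ?_
    rw [norm_smul, norm_mul, norm_pow, show Complex.I * (c * x) * y =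
      ((c * x * y : ℝ) : ℂ) * Complex.I by push_cast; ring, Complex.norm_exp_ofReal_mul_I,
      Real.norm_of_nonneg (one_sub_sq_rpow_nonneg (Set.Ioc_subset_Icc_self hy) _), norm_mul,
      Complex.norm_I, ← Complex.ofReal_mul, Complex.norm_real, Real.norm_eq_abs]
    ring
  rw [hF, norm_mul, mul_pow, Complex.norm_real, Real.norm_eq_abs, sq_abs]
  calc a ^ 2 * _ ≤ a ^ 2 * (B * |c * x| ^ k) ^ 2 := by gcongr
    _ = a ^ 2 * B ^ 2 * (c ^ (2 * k) * x ^ (2 * k)) := by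
        rw [mul_pow, ← pow_mul, mul_comm k 2, (even_two_mul k).pow_abs, mul_pow]
        ring
    _ = B / (k.factorial * L) * (c ^ (2 * k) * x ^ (2 * k)) := by
        congr 1
        rw [eq_div_iff (by positivity)]
        linear_combination B * hsq
    _ = _ := by ring

lemma Gamma_quotient_le {α : ℝ} (hα : 0 ≤ α) {k : ℕ} (hk : 1 ≤ k) :
    √π * Gamma (α + k + 1) / Gamma (α + k + 3 / 2) /
        (k.factorial * (Gamma (2 * α + 2 * k + 1) / Gamma (2 * α + k + 1))) *
        (Gamma (k + 1 / 2) * Gamma (α + 1) / Gamma (k + α + 3 / 2)) ≤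
      π * Gamma (α + 1) / (4 ^ k * (k : ℝ) ^ α * Gamma (k + 3 / 2) ^ 2) := by
  have hk1 : (1 : ℝ) ≤ k := by exact_mod_cast hk
  have d1 := Gamma_mul_Gamma_add_half (α + k + 1 / 2)
  have d2 := Gamma_mul_Gamma_add_half (α + (k + 1) / 2)
  have d3 := Gamma_mul_Gamma_add_half ((k + 1) / 2)
  have i1 := Gamma_add_mul_Gamma_le (x := ((k : ℝ) + 1) / 2) (y := k + 3 / 2) (s := α)
    (by positivity) (by linarith) hα
  have i2 := Gamma_add_mul_Gamma_le (x := (k : ℝ) / 2 + 1) (y := k + 1 / 2) (s := α)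
    (by positivity) (by linarith) hα
  have i3 : (k : ℝ) ^ α * Gamma (k + 3 / 2) ≤ Gamma (α + k + 3 / 2) := by
    have h := rpow_mul_Gamma_add_one_le (x := (k : ℝ) + 1 / 2) (s := α) (by positivity) hα
    rw [show (k : ℝ) + 1 / 2 + 1 + α = α + k + 3 / 2 by ring,
      show (k : ℝ) + 1 / 2 + 1 = k + 3 / 2 by ring] at h
    refine le_trans ?_ h
    have := (Gamma_pos_of_pos (by positivity : (0 : ℝ) < k + 3 / 2)).le
    gcongr
    linarith
  rw [show α + k + 1 / 2 + 1 / 2 = α + k + 1 by ring,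
    show 2 * (α + k + 1 / 2) = 2 * α + 2 * k + 1 by ring,
    show 1 - (2 * α + 2 * k + 1) = -(2 * α + 2 * k) by ring] at d1
  rw [show α + ((k : ℝ) + 1) / 2 + 1 / 2 = α + k / 2 + 1 by ring,
    show 2 * (α + ((k : ℝ) + 1) / 2) = 2 * α + k + 1 by ring,
    show 1 - (2 * α + k + 1) = -(2 * α + 2 * k) + k by ring, rpow_add two_pos,
    rpow_natCast] at d2
  rw [show ((k : ℝ) + 1) / 2 + 1 / 2 = k / 2 + 1 by ring,
    show 2 * (((k : ℝ) + 1) / 2) = k + 1 by ring, Gamma_nat_eq_factorial,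
    show 1 - ((k : ℝ) + 1) = -k by ring, rpow_neg two_pos.le, rpow_natCast] at d3
  rw [show ((k : ℝ) + 1) / 2 + α = α + (k + 1) / 2 by ring,
    show (k : ℝ) + 3 / 2 + α = α + k + 3 / 2 by ring] at i1
  rw [show (k : ℝ) / 2 + 1 + α = α + k / 2 + 1 by ring,
    show (k : ℝ) + 1 / 2 + α = α + k + 1 / 2 by ring] at i2
  rw [show (k : ℝ) + α + 3 / 2 = α + k + 3 / 2 by ring]
  have ht : (0 : ℝ) < 2 ^ (-(2 * α + 2 * k)) := by positivity
  have hs : 0 < √π := sqrt_pos.2 pi_pos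
  have hss : √π * √π = π := mul_self_sqrt pi_pos.le
  have hfac : (0 : ℝ) < k.factorial := by exact_mod_cast k.factorial_pos
  have hkα : 0 < (k : ℝ) ^ α := by positivity
  have h4 : (4 : ℝ) ^ k = 2 ^ k * 2 ^ k := by rw [← mul_pow]; norm_num
  have g1 := Gamma_pos_of_pos (by positivity : 0 < α + k + 1)
  have g2 := Gamma_pos_of_pos (by positivity : 0 < α + k + 1 / 2)
  have g3 := Gamma_pos_of_pos (by positivity : 0 < α + k + 3 / 2)
  have g4 := Gamma_pos_of_pos (by positivity : 0 < 2 * α + 2 * k + 1)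
  have g5 := Gamma_pos_of_pos (by positivity : 0 < 2 * α + k + 1)
  have g6 := Gamma_pos_of_pos (by positivity : 0 < α + (k + 1) / 2)
  have g7 := Gamma_pos_of_pos (by positivity : 0 < α + k / 2 + 1)
  have g8 := Gamma_pos_of_pos (by positivity : (0 : ℝ) < (k + 1) / 2)
  have g9 := Gamma_pos_of_pos (by positivity : (0 : ℝ) < k / 2 + 1)
  have g10 := Gamma_pos_of_pos (by positivity : (0 : ℝ) < k + 3 / 2)
  have g11 := Gamma_pos_of_pos (by positivity : (0 : ℝ) < k + 1 / 2)
  have g12 := Gamma_pos_of_pos (by positivity : 0 < α + 1)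
  generalize Gamma (α + k + 1) = G1 at *
  generalize Gamma (α + k + 1 / 2) = Gh at *
  generalize Gamma (α + k + 3 / 2) = G3 at *
  generalize Gamma (2 * α + 2 * k + 1) = A at *
  generalize Gamma (2 * α + k + 1) = A₂ at *
  generalize Gamma (α + (k + 1) / 2) = p at *
  generalize Gamma (α + k / 2 + 1) = q at *
  generalize Gamma (((k : ℝ) + 1) / 2) = p₀ at *
  generalize Gamma ((k : ℝ) / 2 + 1) = q₀ at *
  generalize Gamma ((k : ℝ) + 3 / 2) = H3 at *
  generalize Gamma ((k : ℝ) + 1 / 2) = Hh at *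
  generalize (2 : ℝ) ^ (-(2 * α + 2 * k)) = t at *
  have hA : A = Gh * G1 / (t * √π) := by rw [d1]; field_simp
  have hA₂ : A₂ = p * q / (t * 2 ^ k * √π) := by rw [d2]; field_simp
  calc √π * G1 / G3 / (k.factorial * (A / A₂)) * (Hh * Gamma (α + 1) / G3)
      = √π * Gamma (α + 1) / (2 ^ k * G3 ^ 2 * k.factorial * Gh * H3) * (p * H3) * (q * Hh) := by
        rw [hA, hA₂]; field_simp
    _ ≤ √π * Gamma (α + 1) / (2 ^ k * G3 ^ 2 * k.factorial * Gh * H3) * (p₀ * G3) *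
          (q₀ * Gh) := by gcongr
    _ = √π * Gamma (α + 1) / (2 ^ k * G3 * k.factorial * H3) * (p₀ * q₀) := by field_simp
    _ = π * Gamma (α + 1) / (4 ^ k * G3 * H3) := by
        rw [d3, h4]
        nth_rewrite 3 [← hss]
        field_simp
    _ ≤ π * Gamma (α + 1) / (4 ^ k * (k ^ α * H3) * H3) := by gcongr
    _ = _ := by ring

/-- Bound on the weighted `L²` norm of the weighted finite Fourier transform of the
normalized Jacobi polynomial `P̃_k = P̃_k^{(α,α)}`. The polynomial `P` is characterized (up to
sign, which does not affect the conclusion) by: degree `k`, orthogonality to all lower degree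
polynomials in `L²([-1,1],(1-x²)^α dx)`, and unit norm in that space. Then
`‖F_c^{(α)} P̃_k‖_{L²(I,ω_α)} ≤ (π √Γ(α+1)/(√c k^{(α+1)/2})) (ce/(2k+1))^{k+1/2}`. -/
theorem weighted_fourier_jacobi_bound (c α : ℝ) (hc : 0 < c) (hα : 0 ≤ α)
    (k : ℕ) (hk : 1 ≤ k) (P : Polynomial ℝ)
    (hdeg : P.natDegree = k)
    (horth : ∀ Q : Polynomial ℝ, Q.natDegree < k →
      (∫ x in (-1 : ℝ)..1, P.eval x * Q.eval x * (1 - x ^ 2) ^ α) = 0)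
    (hnorm : (∫ x in (-1 : ℝ)..1, (P.eval x) ^ 2 * (1 - x ^ 2) ^ α) = 1) :
    Real.sqrt (∫ x in (-1 : ℝ)..1,
        ‖∫ y in (-1 : ℝ)..1,
            Complex.exp (Complex.I * (c * x * y)) * (↑(P.eval y) : ℂ) *
              (((1 - y ^ 2) ^ α : ℝ) : ℂ)‖ ^ 2 * (1 - x ^ 2) ^ α)
      ≤ π * Real.sqrt (Real.Gamma (α + 1)) / (Real.sqrt c * (k : ℝ) ^ ((α + 1) / 2)) *
        (c * Real.exp 1 / (2 * (k : ℝ) + 1)) ^ ((k : ℝ) + 1/2) := by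
  have hk0 : (0 : ℝ) < k := by exact_mod_cast hk
  have hG : 0 < Gamma (α + 1) := Gamma_pos_of_pos (by positivity)
  have hH : 0 < Gamma ((k : ℝ) + 3 / 2) := Gamma_pos_of_pos (by positivity)
  set K := (∫ y in (-1 : ℝ)..1, (1 - y ^ 2) ^ (α + k)) /
    (k.factorial * (Gamma (2 * α + 2 * k + 1) / Gamma (2 * α + k + 1))) with hK
  have hKM : K * (∫ x in (-1 : ℝ)..1, x ^ (2 * k) * (1 - x ^ 2) ^ α) ≤
      π * Gamma (α + 1) / (4 ^ k * (k : ℝ) ^ α * Gamma (k + 3 / 2) ^ 2) := by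
    rw [hK, integral_one_sub_sq_rpow (le_add_of_nonneg_of_le hα (by exact_mod_cast hk)),
      integral_pow_mul_one_sub_sq_rpow hα hk]
    exact Gamma_quotient_le hα hk
  have hcont : Continuous fun x : ℝ => c ^ (2 * k) * K * (x ^ (2 * k) * (1 - x ^ 2) ^ α) :=
    continuous_const.mul ((continuous_pow _).mul (continuous_one_sub_sq_rpow hα))
  refine Real.sqrt_le_iff.2 ⟨by positivity, ?_⟩
  calc _ ≤ _ := Real.le_norm_self _
    _ ≤ ∫ x in (-1 : ℝ)..1, c ^ (2 * k) * K * (x ^ (2 * k) * (1 - x ^ 2) ^ α) := by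
        refine intervalIntegral.norm_integral_le_of_norm_le (by norm_num)
          (Filter.Eventually.of_forall fun x hx => ?_) (hcont.intervalIntegrable _ _)
        have hw := one_sub_sq_rpow_nonneg (Set.Ioc_subset_Icc_self hx) α
        rw [Real.norm_of_nonneg (by positivity), ← mul_assoc]
        exact mul_le_mul_of_nonneg_right (norm_sq_fourier_le hα hk hdeg horth hnorm c x) hw
    _ = c ^ (2 * k) * (K * ∫ x in (-1 : ℝ)..1, x ^ (2 * k) * (1 - x ^ 2) ^ α) := by
        rw [intervalIntegral.integral_const_mul, mul_assoc]
    _ ≤ c ^ (2 * k) * (π * Gamma (α + 1) / (4 ^ k * (k : ℝ) ^ α * Gamma (k + 3 / 2) ^ 2)) := by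
        gcongr
    _ = c ^ (2 * k) * π * Gamma (α + 1) / (k ^ α * k * (2 * (k : ℝ) + 1) ^ (2 * k + 1)) *
          (k * (2 * (k : ℝ) + 1) ^ (2 * k + 1)) / (4 ^ k * Gamma (k + 3 / 2) ^ 2) := by
        field_simp
    _ ≤ c ^ (2 * k) * π * Gamma (α + 1) / (k ^ α * k * (2 * (k : ℝ) + 1) ^ (2 * k + 1)) *
          (π * exp 1 ^ (2 * k + 1) * 4 ^ k * Gamma (k + 3 / 2) ^ 2) /
          (4 ^ k * Gamma (k + 3 / 2) ^ 2) := by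
        refine div_le_div_of_nonneg_right (mul_le_mul_of_nonneg_left
          (stirling_lower_bound_Gamma_add_three_halves hk) ?_) ?_ <;> positivity
    _ = (π * √(Gamma (α + 1)) / (√c * (k : ℝ) ^ ((α + 1) / 2)) *
          (c * exp 1 / (2 * (k : ℝ) + 1)) ^ ((k : ℝ) + 1 / 2)) ^ 2 := by
        have e1 : ((k : ℝ) ^ ((α + 1) / 2)) ^ 2 = k ^ α * k := by
          rw [← rpow_natCast, ← rpow_mul hk0.le, ← rpow_add_one hk0.ne']
          congr 1
          push_cast
          ring
        have e2 : ((c * exp 1 / (2 * (k : ℝ) + 1)) ^ ((k : ℝ) + 1 / 2)) ^ 2 =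
            (c * exp 1 / (2 * (k : ℝ) + 1)) ^ (2 * k + 1) := by
          rw [← rpow_natCast, ← rpow_mul (by positivity), ← rpow_natCast]
          congr 1
          push_cast
          ring
        rw [mul_pow, div_pow, mul_pow, mul_pow, e1, e2, sq_sqrt hG.le, sq_sqrt hc.le, div_pow,
          mul_pow, pow_succ c]
        field_simp
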